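/- M is a generalized stable model of an abduction framework ⟨T,A⟩ if and only if M is a stable model of some completion P ∈ Comp(T,∅,A) of the open program ⟨T,∅,A⟩. -/

import Mathlib

set_option autoImplicit false

namespace LP

/-- A first-order signature: function symbols (constants are 0-ary) and
predicate symbols, each with an arity. -/
structure Sig where
  Func : Type
  fArity : Func → ℕ
  Pred : Type
  pArity : Pred → ℕ

/-- First-order terms over signature `σ` with variables from `V`. -/
inductive Term (σ : Sig) (V : Type) : Type
  | var : V → Term σ V
  | app : (f : σ.Func) → (Fin (σ.fArity f) → Term σ V) → Term σ V

abbrev GroundTerm (σ : Sig) : Type := Term σ Empty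

/-- An atom `p(t₁,…,tₙ)`. -/
structure Atom (σ : Sig) (V : Type) : Type where
  pred : σ.Pred
  args : Fin (σ.pArity pred) → Term σ V

abbrev GroundAtom (σ : Sig) : Type := Atom σ Empty

/-- A normal rule `H ← A₁,…,Aₘ,¬B₁,…,¬Bₙ` (variables are natural numbers). -/
structure Rule (σ : Sig) : Type where
  head : Atom σ ℕ
  pos : List (Atom σ ℕ)
  neg : List (Atom σ ℕ)

/-- A normal logic program: a (possibly infinite) set of rules. -/
abbrev Program (σ : Sig) : Type := Set (Rule σ)

/-- A Herbrand interpretation: a set of ground atoms. -/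
abbrev Interp (σ : Sig) : Type := Set (GroundAtom σ)

variable {σ : Sig} {V W : Type}

/-- Function and constant symbols occurring in a term. -/
def Term.funcs : Term σ V → Set σ.Func
  | .var _ => ∅
  | .app f ts => insert f (⋃ i, (ts i).funcs)

def Atom.funcs (a : Atom σ V) : Set σ.Func := ⋃ i, Term.funcs (a.args i)

def Rule.funcs (r : Rule σ) : Set σ.Func :=
  Atom.funcs r.head ∪ (⋃ a ∈ r.pos, Atom.funcs a) ∪ (⋃ a ∈ r.neg, Atom.funcs a)

/-- Function and constant symbols occurring in a program. -/
def Program.funcs (P : Program σ) : Set σ.Func := ⋃ r ∈ P, Rule.funcs r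

def Rule.preds (r : Rule σ) : Set σ.Pred :=
  {q | q = r.head.pred ∨ (∃ a ∈ r.pos, Atom.pred a = q) ∨ (∃ a ∈ r.neg, Atom.pred a = q)}

/-- Predicate symbols occurring in a program. -/
def Program.preds (P : Program σ) : Set σ.Pred := ⋃ r ∈ P, Rule.preds r

def Term.subst (s : V → GroundTerm σ) : Term σ V → GroundTerm σ
  | .var v => s v
  | .app f ts => .app f fun i => (ts i).subst s

def Atom.subst (s : V → GroundTerm σ) (a : Atom σ V) : GroundAtom σ :=
  ⟨a.pred, fun i => Term.subst s (a.args i)⟩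

/-- The Herbrand domain of a program: all ground terms built from the
function and constant symbols occurring in the program. -/
def Program.herbrand (P : Program σ) : Set (GroundTerm σ) :=
  {t | Term.funcs t ⊆ Program.funcs P}

structure GroundRule (σ : Sig) : Type where
  head : GroundAtom σ
  pos : List (GroundAtom σ)
  neg : List (GroundAtom σ)

def Rule.subst (s : ℕ → GroundTerm σ) (r : Rule σ) : GroundRule σ :=
  ⟨Atom.subst s r.head, r.pos.map (Atom.subst s), r.neg.map (Atom.subst s)⟩

/-- The ground instantiation of a program over its Herbrand domain. -/
def Program.groundInst (P : Program σ) : Set (GroundRule σ) :=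
  {g | ∃ r ∈ P, ∃ s : ℕ → GroundTerm σ, (∀ n, s n ∈ Program.herbrand P) ∧ g = Rule.subst s r}

/-- A definite ground rule: a head together with a positive body. -/
abbrev DefiniteRule (σ : Sig) : Type := GroundAtom σ × List (GroundAtom σ)

/-- The Gelfond–Lifschitz reduct `P^M`: delete every ground rule whose negative
body intersects `M`, and delete the negative literals of the remaining rules. -/
def reduct (P : Program σ) (M : Interp σ) : Set (DefiniteRule σ) :=
  {d | ∃ g ∈ Program.groundInst P, (∀ b ∈ g.neg, b ∉ M) ∧ d = (g.head, g.pos)}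

def IsDefiniteModel (R : Set (DefiniteRule σ)) (M : Interp σ) : Prop :=
  ∀ d ∈ R, (∀ b ∈ d.2, b ∈ M) → d.1 ∈ M

/-- The least Herbrand model of a definite ground program. -/
def leastModel (R : Set (DefiniteRule σ)) : Interp σ :=
  ⋂₀ {M | IsDefiniteModel R M}

/-- `M` is a stable model of `P` iff `M` is the least Herbrand model of `P^M`. -/
def IsStableModel (P : Program σ) (M : Interp σ) : Prop :=
  M = leastModel (reduct P M)

/-- A program is consistent if it has at least one stable model. -/
def Consistent (P : Program σ) : Prop := ∃ M, IsStableModel P M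

def Term.vars : Term σ V → Set V
  | .var v => {v}
  | .app _ ts => ⋃ i, (ts i).vars

def Atom.vars (a : Atom σ V) : Set V := ⋃ i, Term.vars (a.args i)

/-- First-order formulas (sentences when closed) over signature `σ`. -/
inductive Formula (σ : Sig) : Type
  | atom : Atom σ ℕ → Formula σ
  | fals : Formula σ
  | not : Formula σ → Formula σ
  | and : Formula σ → Formula σ → Formula σ
  | or : Formula σ → Formula σ → Formula σ
  | all : ℕ → Formula σ → Formula σ
  | ex : ℕ → Formula σ → Formula σ

def Formula.free : Formula σ → Set ℕ
  | .atom a => Atom.vars a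
  | .fals => ∅
  | .not φ => φ.free
  | .and φ ψ => φ.free ∪ ψ.free
  | .or φ ψ => φ.free ∪ ψ.free
  | .all x φ => φ.free \ {x}
  | .ex x φ => φ.free \ {x}

/-- A sentence is a closed formula. -/
def Formula.IsSentence (φ : Formula σ) : Prop := Formula.free φ = ∅

/-- Satisfaction of a formula in a Herbrand interpretation `M`, with quantifiers
ranging over the Herbrand domain `D`, under environment `e`. -/
def Formula.Sat (D : Set (GroundTerm σ)) (M : Interp σ) :
    Formula σ → (ℕ → GroundTerm σ) → Prop
  | .atom a, e => Atom.subst e a ∈ M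
  | .fals, _ => False
  | .not φ, e => ¬ Formula.Sat D M φ e
  | .and φ ψ, e => Formula.Sat D M φ e ∧ Formula.Sat D M ψ e
  | .or φ ψ, e => Formula.Sat D M φ e ∨ Formula.Sat D M ψ e
  | .all x φ, e => ∀ t ∈ D, Formula.Sat D M φ (Function.update e x t)
  | .ex x φ, e => ∃ t ∈ D, Formula.Sat D M φ (Function.update e x t)

/-- A (closed) formula holds in `M` w.r.t. domain `D`. -/
def Holds (D : Set (GroundTerm σ)) (M : Interp σ) (φ : Formula σ) : Prop :=
  ∀ e : ℕ → GroundTerm σ, Formula.Sat D M φ e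

/-- `P` credulously entails `φ`: `φ` holds in some stable model of `P`. -/
def CredulousEntails (P : Program σ) (φ : Formula σ) : Prop :=
  ∃ M, IsStableModel P M ∧ Holds (Program.herbrand P) M φ

/-- `P` skeptically entails `φ`: `φ` holds in every stable model of `P`. -/
def SkepticalEntails (P : Program σ) (φ : Formula σ) : Prop :=
  ∀ M, IsStableModel P M → Holds (Program.herbrand P) M φ

/-- `P'` is a completion of the open program `⟨P,F,O⟩`. -/
def IsCompletion (P : Program σ) (F : Set σ.Func) (O : Set σ.Pred) (P' : Program σ) : Prop :=
  P ⊆ P' ∧ Program.funcs P' ⊆ Program.funcs P ∪ F ∧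
    ∀ r ∈ P', r ∉ P → r.head.pred ∈ O

/-- Credulous open inference `⟨P,F,O⟩ ⊨crd φ`. -/
def OpenCrd (P : Program σ) (F : Set σ.Func) (O : Set σ.Pred) (φ : Formula σ) : Prop :=
  ∃ P', IsCompletion P F O P' ∧ CredulousEntails P' φ

/-- Skeptical open inference `⟨P,F,O⟩ ⊨skp φ`. -/
def OpenSkp (P : Program σ) (F : Set σ.Func) (O : Set σ.Pred) (φ : Formula σ) : Prop :=
  ∀ P', IsCompletion P F O P' → SkepticalEntails P' φ

/-- Mixed open inference I, `⟨P,F,O⟩ ⊨cs φ`. -/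
def OpenCS (P : Program σ) (F : Set σ.Func) (O : Set σ.Pred) (φ : Formula σ) : Prop :=
  ∃ P', IsCompletion P F O P' ∧ Consistent P' ∧ SkepticalEntails P' φ

/-- Mixed open inference II, `⟨P,F,O⟩ ⊨sc φ`. -/
def OpenSC (P : Program σ) (F : Set σ.Func) (O : Set σ.Pred) (φ : Formula σ) : Prop :=
  ∀ P', IsCompletion P F O P' → Consistent P' → CredulousEntails P' φ

def Term.mapVar (h : V → W) : Term σ V → Term σ W
  | .var v => .var (h v)
  | .app f ts => .app f fun i => (ts i).mapVar h

def Term.ofGround (t : GroundTerm σ) : Term σ ℕ := Term.mapVar Empty.elim t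

def Atom.ofGround (a : GroundAtom σ) : Atom σ ℕ :=
  ⟨a.pred, fun i => Term.ofGround (a.args i)⟩

/-- The ground fact (rule with empty body) corresponding to a ground atom. -/
def factOf (a : GroundAtom σ) : Rule σ := ⟨Atom.ofGround a, [], []⟩

def Rule.IsGroundFact (r : Rule σ) : Prop := ∃ a : GroundAtom σ, r = factOf a

def factsOf (E : Set (GroundAtom σ)) : Program σ := factOf '' E

/-- `Abducibles(T,A)`: all ground atoms over the Herbrand domain of `T`
whose predicate is abducible. -/
def Abducibles (T : Program σ) (A : Set σ.Pred) : Set (GroundAtom σ) :=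
  {a | a.pred ∈ A ∧ Atom.funcs a ⊆ Program.funcs T}

/-- Generalized stable model of an abduction framework `⟨T,A⟩`. -/
def IsGeneralizedStableModel (T : Program σ) (A : Set σ.Pred) (M : Interp σ) : Prop :=
  ∃ E ⊆ Abducibles T A, IsStableModel (T ∪ factsOf E) M

/-- `Abducibles^o(T,A)` w.r.t. skolem constants `Sk`. -/
def AbduciblesO (T : Program σ) (A : Set σ.Pred) (Sk : Set σ.Func) : Set (GroundAtom σ) :=
  {a | a.pred ∈ A ∧ Atom.funcs a ⊆ Program.funcs T ∪ Sk}

/-- Open generalized stable model of `⟨T,A⟩` w.r.t. skolem constants `Sk`. -/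
def IsOpenGeneralizedStableModel (T : Program σ) (A : Set σ.Pred) (Sk : Set σ.Func)
    (M : Interp σ) : Prop :=
  ∃ E ⊆ AbduciblesO T A Sk, IsStableModel (T ∪ factsOf E) M

end LP
namespace LP

theorem Term.funcs_mapVar {σ : Sig} {V W : Type} (h : V → W) (t : Term σ V) :
    Term.funcs (Term.mapVar h t) = Term.funcs t := by
  induction t with
  | var v => rfl
  | app f ts ih => simp only [Term.mapVar, Term.funcs, ih]

theorem Term.subst_ofGround {σ : Sig} (s : ℕ → GroundTerm σ) (t : GroundTerm σ) :
    Term.subst s (Term.ofGround t) = t := by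
  unfold Term.ofGround
  induction t with
  | var v => exact v.elim
  | app f ts ih => simp only [Term.mapVar, Term.subst, ih]

theorem Atom.subst_ofGround {σ : Sig} (s : ℕ → GroundTerm σ) (a : GroundAtom σ) :
    Atom.subst s (Atom.ofGround a) = a := by
  simp only [Atom.subst, Atom.ofGround, Term.subst_ofGround]

theorem Atom.funcs_ofGround {σ : Sig} (a : GroundAtom σ) :
    Atom.funcs (Atom.ofGround a) = Atom.funcs a := by
  simp only [Atom.funcs, Atom.ofGround, Term.ofGround, Term.funcs_mapVar]

theorem Term.funcs_subst {σ : Sig} {F : Set σ.Func} (s : ℕ → GroundTerm σ)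
    (hs : ∀ n, Term.funcs (s n) ⊆ F) (t : Term σ ℕ) (ht : Term.funcs t ⊆ F) :
    Term.funcs (Term.subst s t) ⊆ F := by
  induction t with
  | var v => exact hs v
  | app f ts ih =>
    simp only [Term.subst, Term.funcs, Set.insert_subset_iff, Set.iUnion_subset_iff] at ht ⊢
    exact ⟨ht.1, fun i => ih i (ht.2 i)⟩

theorem Atom.funcs_subst {σ : Sig} {F : Set σ.Func} (s : ℕ → GroundTerm σ)
    (hs : ∀ n, Term.funcs (s n) ⊆ F) (a : Atom σ ℕ) (ha : Atom.funcs a ⊆ F) :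
    Atom.funcs (Atom.subst s a) ⊆ F := by
  simp only [Atom.funcs, Set.iUnion_subset_iff] at ha ⊢
  exact fun i => Term.funcs_subst s hs _ (ha i)

theorem Rule.funcs_factOf {σ : Sig} (a : GroundAtom σ) :
    Rule.funcs (factOf a) = Atom.funcs a := by
  simp [Rule.funcs, factOf, Atom.funcs_ofGround]

theorem Program.funcs_union_facts {σ : Sig} (T : Program σ) (A : Set σ.Pred)
    (E : Set (GroundAtom σ)) (hE : E ⊆ Abducibles T A) :
    Program.funcs (T ∪ factsOf E) = Program.funcs T := by
  apply Set.Subset.antisymm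
  · intro f hf
    simp only [Program.funcs, Set.mem_iUnion] at hf
    obtain ⟨r, hr, hf⟩ := hf
    rcases hr with hr | ⟨a, ha, rfl⟩
    · exact Set.mem_biUnion hr hf
    · rw [Rule.funcs_factOf] at hf
      exact (hE ha).2 hf
  · exact Set.biUnion_subset_biUnion_left Set.subset_union_left

theorem leastModel_isModel {σ : Sig} (R : Set (DefiniteRule σ)) :
    IsDefiniteModel R (leastModel R) := by
  intro d hd hb N hN
  exact hN d hd fun b hbd => hb b hbd N hN

/-- `M` is a generalized stable model of the abduction framework `⟨T,A⟩` iff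
`M` is a stable model of some completion of the open program `⟨T,∅,A⟩`. -/
theorem generalizedStableModel_iff_completion {σ : Sig} (T : Program σ)
    (A : Set σ.Pred) (M : Interp σ) :
    IsGeneralizedStableModel T A M ↔
      ∃ P, IsCompletion T ∅ A P ∧ IsStableModel P M := by
  constructor
  · rintro ⟨E, hE, hM⟩
    refine ⟨_, ⟨Set.subset_union_left, ?_, ?_⟩, hM⟩
    · rw [Program.funcs_union_facts T A E hE]
      exact Set.subset_union_left
    · rintro r (hr | ⟨a, ha, rfl⟩) hrT
      · exact absurd hr hrT
      · exact (hE ha).1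
  · rintro ⟨P, ⟨hTP, hF, hO⟩, hM⟩
    have hPT : Program.funcs P = Program.funcs T := by
      apply Set.Subset.antisymm
      · simpa using hF
      · exact Set.biUnion_subset_biUnion_left hTP
    let E : Set (GroundAtom σ) := {a | ∃ r ∈ P, r ∉ T ∧ ∃ s : ℕ → GroundTerm σ,
      (∀ n, s n ∈ Program.herbrand P) ∧ (∀ b ∈ (Rule.subst s r).neg, b ∉ M) ∧
      (∀ b ∈ (Rule.subst s r).pos, b ∈ M) ∧ a = (Rule.subst s r).head}
    have hE : E ⊆ Abducibles T A := by
      rintro a ⟨r, hr, hrT, s, hs, -, -, rfl⟩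
      refine ⟨hO r hr hrT, ?_⟩
      rw [← hPT]
      refine Atom.funcs_subst s hs _ ?_
      intro f hf
      exact Set.mem_biUnion hr (Or.inl (Or.inl hf))
    have hQ := Program.funcs_union_facts T A E hE
    have hH : Program.herbrand (T ∪ factsOf E) = Program.herbrand P := by
      simp only [Program.herbrand, hQ, hPT]
    have hMP : IsDefiniteModel (reduct P M) M := by
      have h := leastModel_isModel (reduct P M)
      rwa [← (show M = leastModel (reduct P M) from hM)] at h
    refine ⟨E, hE, Set.Subset.antisymm ?_ ?_⟩
    · intro a ha N hN
      have hNM : IsDefiniteModel (reduct P M) (N ∩ M) := by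
        intro d hd hb
        have hdM := hMP d hd fun b h => (hb b h).2
        refine ⟨?_, hdM⟩
        obtain ⟨g, ⟨r, hr, s, hs, rfl⟩, hneg, rfl⟩ := hd
        by_cases hrT : r ∈ T
        · exact hN _ ⟨_, ⟨r, Or.inl hrT, s, by rwa [hH], rfl⟩, hneg, rfl⟩
            fun b h => (hb b h).1
        · have hmem : (Rule.subst s r).head ∈ E :=
            ⟨r, hr, hrT, s, hs, hneg, fun b h => (hb b h).2, rfl⟩
          have := hN _ ⟨_, ⟨_, Or.inr ⟨_, hmem, rfl⟩, s, by rwa [hH], rfl⟩,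
            by simp [Rule.subst, factOf], rfl⟩ (by simp [Rule.subst, factOf])
          simpa only [Rule.subst, factOf, Atom.subst_ofGround] using this
      rw [(show M = leastModel (reduct P M) from hM)] at ha
      exact (ha _ hNM).1
    · intro a ha
      apply ha
      rintro d ⟨g, ⟨r, hr, s, hs, rfl⟩, hneg, rfl⟩ hb
      rw [hH] at hs
      rcases hr with hr | ⟨e, ⟨r, hr, hrT, s', hs', hneg', hpos', rfl⟩, rfl⟩
      · exact hMP _ ⟨_, ⟨r, hTP hr, s, hs, rfl⟩, hneg, rfl⟩ hb
      · have := hMP _ ⟨_, ⟨r, hr, s', hs', rfl⟩, hneg', rfl⟩ hpos'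
        simpa only [Rule.subst, factOf, Atom.subst_ofGround] using this

end LP
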